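/- For every even positive integer k and every natural number n, there exists a finite graph G (parallel edges allowed) together with a set T ⊆ V(G) of terminals such that |V(G)| ≥ n, the set T is 3k-edge-connected in G, and G does not contain k pairwise edge-disjoint T-connectors. -/

import Mathlib

/-!
Write `k = 2 h`. The counterexample is a long closed ring of nodes, each node having two terminals.
Consecutive nodes are linked by `3 h` connections; a connection is a path
`side e false`, `mid e`, `side e true` whose two end vertices are adjacent to both terminals of the
respective node. The ring is divided into segments of five nodes, and in each segment the middle
vertex of one special connection (in the link entering the node `2`) carries one more edge, a leg,
to one of two exceptional terminals, each of which receives at least `6 h` legs.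

`T` is `6 h`-edge-connected (`edgeConnected`): the terminals of a node are joined by `6 h` disjoint
paths of length two, disconnecting a link takes `3 h` edges, so that fewer than `6 h` edges spoil at
most one link of the ring, and an exceptional terminal has `6 h` disjoint paths to the ring.

Suppose that there are `k` disjoint connectors. Since every `side e s` has degree three, it lies on
at most one of their paths, and every path is of one of three kinds (`classify`): it turns at a side
and joins the two terminals of a node, or crosses a connection, or uses a leg. For a partition of
the terminals into `p` classes, at least `k (p - 1)` paths join different classes (`Census`). Two
partitions are compared. In the basic case the coarse one has as its classes the nodes and the
exceptional terminals, and the fine one consists of singletons; by the degree condition, a segment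
contributes at most `20 k` to the sum of the two counts (paths plus `k` times identifications), up
to one more when its leg is used. In that case the surplus is removed by altering one of the
partitions inside the segment, merging a link, splitting a node, or merging the terminals of a node
(`segment_bound`): if no alteration helps, then exactly `h` paths turn at each end of the link
entering the node `2`, which is impossible because the leg takes a path away from exactly one of
these ends. Altogether every segment, having ten terminals, contributes exactly its due at most, and
nothing is left over for joining the two exceptional terminals to the rest (`census_false`).
-/

/-
Graphs with terminals are modelled as multigraphs: a vertex type `V`, an edge
type `E`, and an incidence map `ends : E → Sym2 V` assigning to each edge its
(unordered) pair of endvertices.  Parallel edges are allowed since distinct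
edges may have equal endpoint pairs.
-/

namespace TConnectors

variable {V E : Type}

/-- A walk in a multigraph given by an incidence map `ends : E → Sym2 V`. -/
inductive Walk (ends : E → Sym2 V) : V → V → Type where
  | nil (v : V) : Walk ends v v
  | cons {u v w : V} (e : E) (he : ends e = s(u, v)) (p : Walk ends v w) : Walk ends u w

/-- The list of edges of a walk. -/
def Walk.edges {ends : E → Sym2 V} : ∀ {u v : V}, Walk ends u v → List E
  | _, _, .nil _ => []
  | _, _, .cons e _ p => e :: p.edges

/-- The list of vertices of a walk. -/
def Walk.support {ends : E → Sym2 V} : ∀ {u v : V}, Walk ends u v → List V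
  | _, v, .nil _ => [v]
  | u, _, .cons _ _ p => u :: p.support

/-- `T` is `d`-edge-connected in the multigraph: there is no edge-cut of
size smaller than `d` separating two vertices of `T`, i.e. after deleting any
set of fewer than `d` edges, any two terminals are still joined by a walk. -/
def EdgeConnectedIn (ends : E → Sym2 V) (T : Set V) (d : ℕ) : Prop :=
  ∀ S : Finset E, S.card < d → ∀ t₁ ∈ T, ∀ t₂ ∈ T,
    ∃ p : Walk ends t₁ t₂, ∀ e ∈ p.edges, e ∉ S

/-- A `T`-path: a nontrivial path whose endvertices belong to `T` and whose
internal vertices lie outside `T`. -/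
def IsTPath (ends : E → Sym2 V) (T : Set V) {u v : V} (p : Walk ends u v) : Prop :=
  u ∈ T ∧ v ∈ T ∧ p.support.Nodup ∧ p.edges ≠ [] ∧
    ∀ w ∈ p.support.tail.dropLast, w ∉ T

/-- `C` is the edge set of a `T`-connector: a union of a family of pairwise
edge-disjoint `T`-paths such that the auxiliary multigraph on vertex set `T`,
with one edge joining the two endvertices of each `T`-path of the family,
is connected. -/
def IsConnector (ends : E → Sym2 V) (T : Set V) (C : Set E) : Prop :=
  ∃ (m : ℕ) (a b : Fin m → V) (p : ∀ i, Walk ends (a i) (b i)),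
    (∀ i, IsTPath ends T (p i)) ∧
    (∀ i j, i ≠ j → ∀ e ∈ (p i).edges, e ∉ (p j).edges) ∧
    C = { e | ∃ i, e ∈ (p i).edges } ∧
    ∀ t₁ ∈ T, ∀ t₂ ∈ T,
      Relation.ReflTransGen
        (fun x y => ∃ i, (a i = x ∧ b i = y) ∨ (a i = y ∧ b i = x)) t₁ t₂

/-! ### The graph -/

/-- Ring vertices of the construction, grouped into segments of five consecutive ones. -/
abbrev Node (ι : Type) : Type := ι × Fin 5

/-- An element `(l, x)` is the `x`-th of the `r` parallel connections of the ring link that enters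
the node `l`. -/
abbrev Elem (ι : Type) (r : ℕ) : Type := Node ι × Fin r

/-- The terminals: two for every node, and two exceptional ones. -/
abbrev Term (ι : Type) : Type := Node ι × Bool ⊕ Bool

/-- Vertices of the graph. A connection `e` has the two nonterminal vertices `side e true` (at the
node its link enters) and `side e false` (at the preceding node), and the nonterminal `mid e`
between them. -/
inductive Vert (ι : Type) (r : ℕ) : Type
  | term (τ : Term ι)
  | side (e : Elem ι r) (s : Bool)
  | mid (e : Elem ι r)

/-- Edges of the graph: `att e s b` joins `side e s` to the terminal `b` of the corresponding node,
`arm e s` joins `side e s` to `mid e`, and `leg t` joins the middle vertex of one special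
connection of the segment `t` to an exceptional terminal. -/
inductive Edge (ι : Type) (r : ℕ) : Type
  | att (e : Elem ι r) (s b : Bool)
  | arm (e : Elem ι r) (s : Bool)
  | leg (t : ι)

open Vert Edge

section Construction

variable {ι : Type} {r : ℕ}

/-- The node preceding a given one on the ring; `σ` sends a segment to the preceding segment. -/
def pv (σ : Equiv.Perm ι) (v : Node ι) : Node ι := (if v.2 = 0 then σ v.1 else v.1, v.2 - 1)

/-- The node at which the side `s` of the connection `e` is located. -/
def node (σ : Equiv.Perm ι) (e : Elem ι r) (s : Bool) : Node ι := if s then e.1 else pv σ e.1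

/-- The special connection of the segment `t`, the one that carries a leg. -/
def cl (x₀ : Fin r) (t : ι) : Elem ι r := ((t, 2), x₀)

/-- The incidence map of the graph. -/
def inc (σ : Equiv.Perm ι) (zed : ι → Bool) (x₀ : Fin r) : Edge ι r → Sym2 (Vert ι r)
  | att e s b => s(side e s, term (Sum.inl (node σ e s, b)))
  | arm e s => s(side e s, mid e)
  | leg t => s(mid (cl x₀ t), term (Sum.inr (zed t)))

/-- The set of terminals. -/
def terms (ι : Type) (r : ℕ) : Set (Vert ι r) := Set.range term

/-- The possible shapes of a path between terminals: `inl (e, s)` joins the two terminals of a node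
through `side e s`; `inr (inl e)` crosses the connection `e` from one node to the next one;
`inr (inr (t, s))` uses the leg of the segment `t` and leaves its special connection at the
side `s`. -/
abbrev Kind (ι : Type) (r : ℕ) : Type := (Elem ι r × Bool) ⊕ (Elem ι r ⊕ (ι × Bool))

/-- `τ₁` and `τ₂` can be the ends of a path of the given kind. -/
def KindEnds (σ : Equiv.Perm ι) (zed : ι → Bool) (x₀ : Fin r) (τ₁ τ₂ : Term ι) :
    Kind ι r → Prop
  | Sum.inl (e, s) => ∃ b, τ₁ = Sum.inl (node σ e s, b) ∧ τ₂ = Sum.inl (node σ e s, !b)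
  | Sum.inr (Sum.inl e) =>
      ∃ s b b', τ₁ = Sum.inl (node σ e s, b) ∧ τ₂ = Sum.inl (node σ e (!s), b')
  | Sum.inr (Sum.inr (t, s)) => ∃ b,
      (τ₁ = Sum.inr (zed t) ∧ τ₂ = Sum.inl (node σ (cl x₀ t) s, b)) ∨
      (τ₂ = Sum.inr (zed t) ∧ τ₁ = Sum.inl (node σ (cl x₀ t) s, b))

/-- The edges that a path of the given kind has to contain. -/
def KindEdges (x₀ : Fin r) (L : List (Edge ι r)) : Kind ι r → Prop
  | Sum.inl (e, s) => ∀ b, att e s b ∈ L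
  | Sum.inr (Sum.inl e) => ∀ s, arm e s ∈ L ∧ ∃ b, att e s b ∈ L
  | Sum.inr (Sum.inr (t, s)) => leg t ∈ L ∧ arm (cl x₀ t) s ∈ L ∧ ∃ b, att (cl x₀ t) s b ∈ L

/-- A path of the given kind passes through the vertex `side e s`. -/
def Touch (x₀ : Fin r) (e : Elem ι r) (s : Bool) : Kind ι r → Prop
  | Sum.inl (e', s') => e' = e ∧ s' = s
  | Sum.inr (Sum.inl e') => e' = e
  | Sum.inr (Sum.inr (t, s')) => cl x₀ t = e ∧ s' = s

/-! ### Shapes of paths between terminals -/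

/-- The vertex `side e s` has degree three, so two paths passing through it share an edge. -/
lemma kind_conflict {x₀ : Fin r} {L L' : List (Edge ι r)} {K K' : Kind ι r} {e : Elem ι r}
    {s : Bool} (h : KindEdges x₀ L K) (h' : KindEdges x₀ L' K') (ht : Touch x₀ e s K)
    (ht' : Touch x₀ e s K') (hd : ∀ a ∈ L, a ∉ L') : False := by
  have key : ∀ {L : List (Edge ι r)} {K : Kind ι r}, KindEdges x₀ L K → Touch x₀ e s K →
      (∀ b, att e s b ∈ L) ∨ (arm e s ∈ L ∧ ∃ b, att e s b ∈ L) := by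
    rintro L (⟨e', s'⟩ | e' | ⟨t, s'⟩) h ht
    · obtain ⟨rfl, rfl⟩ := ht
      exact Or.inl h
    · obtain rfl := ht
      exact Or.inr (h s)
    · obtain ⟨rfl, rfl⟩ := ht
      exact Or.inr h.2
  rcases key h ht with h1 | ⟨h1, b, hb⟩ <;> rcases key h' ht' with h2 | ⟨h2, b', hb'⟩
  · exact hd _ (h1 true) (h2 true)
  · exact hd _ (h1 b') hb'
  · exact hd _ hb (h2 b)
  · exact hd _ h1 h2

variable {σ : Equiv.Perm ι} {zed : ι → Bool} {x₀ : Fin r}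

lemma step_node {v : Node ι} {b : Bool} {e : Edge ι r} {w : Vert ι r}
    (h : inc σ zed x₀ e = s(term (Sum.inl (v, b)), w)) :
    ∃ e' s, node σ e' s = v ∧ e = att e' s b ∧ w = side e' s := by
  cases e <;> simp only [inc, Sym2.eq_iff] at h <;> grind

lemma step_exceptional {b : Bool} {e : Edge ι r} {w : Vert ι r}
    (h : inc σ zed x₀ e = s(term (Sum.inr b), w)) :
    ∃ t, zed t = b ∧ e = leg t ∧ w = mid (cl x₀ t) := by
  cases e <;> simp only [inc, Sym2.eq_iff] at h <;> grind

lemma step_side {e' : Elem ι r} {s : Bool} {e : Edge ι r} {w : Vert ι r}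
    (h : inc σ zed x₀ e = s(side e' s, w)) :
    (∃ b, e = att e' s b ∧ w = term (Sum.inl (node σ e' s, b))) ∨ (e = arm e' s ∧ w = mid e') := by
  cases e <;> simp only [inc, Sym2.eq_iff] at h <;> grind

lemma step_mid {e' : Elem ι r} {e : Edge ι r} {w : Vert ι r}
    (h : inc σ zed x₀ e = s(mid e', w)) :
    (∃ s, e = arm e' s ∧ w = side e' s) ∨
      (∃ t, cl x₀ t = e' ∧ e = leg t ∧ w = term (Sum.inr (zed t))) := by
  cases e <;> simp only [inc, Sym2.eq_iff] at h <;> grind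

lemma support_ne_nil {A B : Type} {f : B → Sym2 A} {u v : A} (q : Walk f u v) :
    q.support ≠ [] := by
  cases q <;> simp [Walk.support]

lemma start_mem_support {A B : Type} {f : B → Sym2 A} {u v : A} (q : Walk f u v) :
    u ∈ q.support := by
  cases q <;> simp [Walk.support]

lemma end_mem_support {A B : Type} {f : B → Sym2 A} {u v : A} (q : Walk f u v) :
    v ∈ q.support := by
  induction q with
  | nil => simp [Walk.support]
  | cons _ _ _ ih => simp [Walk.support, ih]

/-- A walk without internal terminals stops at the first terminal that it reaches. -/
lemma walk_term {τ : Term ι} {v : Vert ι r} (q : Walk (inc σ zed x₀) (term τ) v)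
    (h : ∀ w ∈ q.support.dropLast, w ∉ terms ι r) : v = term τ := by
  cases q with
  | nil => rfl
  | cons e he p =>
    refine absurd ⟨τ, rfl⟩ (h (term τ) ?_)
    simp [Walk.support, List.dropLast_cons_of_ne_nil (support_ne_nil p)]

lemma walk_side {e : Elem ι r} {s : Bool} {v : Vert ι r}
    (q : Walk (inc σ zed x₀) (side e s) v) (hv : v ∈ terms ι r)
    (h : ∀ w ∈ q.support.dropLast, w ∉ terms ι r) :
    (∃ b, v = term (Sum.inl (node σ e s, b)) ∧ att e s b ∈ q.edges) ∨
    (arm e s ∈ q.edges ∧ ∃ q' : Walk (inc σ zed x₀) (mid e) v,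
      q.edges = arm e s :: q'.edges ∧ q.support = side e s :: q'.support) := by
  cases q with
  | nil => obtain ⟨τ, hτ⟩ := hv; cases hτ
  | cons a he p =>
    rcases step_side he with ⟨b, rfl, rfl⟩ | ⟨rfl, rfl⟩
    · refine Or.inl ⟨b, ?_, by simp [Walk.edges]⟩
      refine walk_term p fun w hw => h w ?_
      simp only [Walk.support, List.dropLast_cons_of_ne_nil (support_ne_nil p)]
      exact List.mem_cons_of_mem _ hw
    · exact Or.inr ⟨by simp [Walk.edges], p, rfl, rfl⟩

lemma walk_mid {e : Elem ι r} {v : Vert ι r}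
    (q : Walk (inc σ zed x₀) (mid e) v) (hv : v ∈ terms ι r)
    (h : ∀ w ∈ q.support.dropLast, w ∉ terms ι r) :
    (∃ t, cl x₀ t = e ∧ v = term (Sum.inr (zed t)) ∧ leg t ∈ q.edges) ∨
    (∃ s, arm e s ∈ q.edges ∧ ∃ q' : Walk (inc σ zed x₀) (side e s) v,
      q.edges = arm e s :: q'.edges ∧ q.support = mid e :: q'.support) := by
  cases q with
  | nil => obtain ⟨τ, hτ⟩ := hv; cases hτ
  | cons a he p =>
    rcases step_mid he with ⟨s, rfl, rfl⟩ | ⟨t, ht, rfl, rfl⟩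
    · exact Or.inr ⟨s, by simp [Walk.edges], p, rfl, rfl⟩
    · refine Or.inl ⟨t, ht, ?_, by simp [Walk.edges]⟩
      refine walk_term p fun w hw => h w ?_
      simp only [Walk.support, List.dropLast_cons_of_ne_nil (support_ne_nil p)]
      exact List.mem_cons_of_mem _ hw

lemma mem_dropLast_cons {A : Type} {a x : A} {L : List A} (h : x ∈ L.dropLast) :
    x ∈ (a :: L).dropLast := by
  cases L with
  | nil => simp at h
  | cons b L => simp only [List.dropLast_cons_cons]; exact List.mem_cons_of_mem _ h

/-- Every path between terminals has one of the kinds listed in `Kind`. -/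
lemma classify {u v : Vert ι r} (p : Walk (inc σ zed x₀) u v)
    (hp : IsTPath (inc σ zed x₀) (terms ι r) p) :
    ∃ τ₁ τ₂ K, u = term τ₁ ∧ v = term τ₂ ∧ KindEnds σ zed x₀ τ₁ τ₂ K ∧
      KindEdges x₀ p.edges K := by
  obtain ⟨⟨τ, rfl⟩, hv, hnd, hne, hint⟩ := hp
  cases p with
  | nil => exact absurd rfl hne
  | cons a he q =>
    simp only [Walk.support, List.tail_cons, List.nodup_cons] at hnd hint
    rcases τ with ⟨n, b⟩ | b
    · obtain ⟨e, s, rfl, rfl, rfl⟩ := step_node he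
      rcases walk_side q hv hint with ⟨b', rfl, hb'⟩ | ⟨harm, q₁, hq₁, hs₁⟩
      · have hbb : b' = !b := by
          by_contra hcon
          have : b' = b := by cases b <;> cases b' <;> simp_all
          subst this
          exact hnd.1 (end_mem_support q)
        subst hbb
        refine ⟨_, _, Sum.inl (e, s), rfl, rfl, ⟨b, rfl, rfl⟩, ?_⟩
        intro c
        by_cases hc : c = b
        · subst hc; simp [Walk.edges]
        · have : c = !b := by cases b <;> cases c <;> simp_all
          subst this; simp [Walk.edges, hb']
      · rw [hs₁] at hint hnd
        have hint₁ := fun w hw => hint w (mem_dropLast_cons hw)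
        rcases walk_mid q₁ hv hint₁ with ⟨t, rfl, rfl, ht⟩ | ⟨s', harm', q₂, hq₂, hs₂⟩
        · refine ⟨_, _, Sum.inr (Sum.inr (t, s)), rfl, rfl, ⟨b, Or.inr ⟨rfl, rfl⟩⟩, ?_, ?_, b, ?_⟩
            <;> simp [Walk.edges, hq₁, ht]
        · have hss : s' = !s := by
            by_contra hcon
            have : s' = s := by cases s <;> cases s' <;> simp_all
            subst this
            have := start_mem_support q₂
            simp [hs₂, this] at hnd
          subst hss
          rw [hs₂] at hint₁
          rcases walk_side q₂ hv (fun w hw => hint₁ w (mem_dropLast_cons hw)) with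
            ⟨b', rfl, hb'⟩ | ⟨harm'', q₃, hq₃, hs₃⟩
          · refine ⟨_, _, Sum.inr (Sum.inl e), rfl, rfl, ⟨s, b, b', rfl, rfl⟩, ?_⟩
            intro c
            by_cases hc : c = s
            · subst hc
              exact ⟨by simp [Walk.edges, hq₁], b, by simp [Walk.edges]⟩
            · have : c = !s := by cases s <;> cases c <;> simp_all
              subst this
              exact ⟨by simp [Walk.edges, hq₁, hq₂], b', by simp [Walk.edges, hq₁, hq₂, hb']⟩
          · have := start_mem_support q₃
            simp [hs₂, hs₃, this] at hnd
    · obtain ⟨t, rfl, rfl, rfl⟩ := step_exceptional he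
      rcases walk_mid q hv hint with ⟨t', ht, rfl, -⟩ | ⟨s, harm, q₁, hq₁, hs₁⟩
      · -- a second leg would lead back to the same exceptional terminal
        have htt : t' = t := by simpa [cl] using ht
        subst htt
        exact absurd (end_mem_support q) hnd.1
      · rw [hs₁] at hint hnd
        rcases walk_side q₁ hv (fun w hw => hint w (mem_dropLast_cons hw)) with
          ⟨b', rfl, hb'⟩ | ⟨harm', q₂, hq₂, hs₂⟩
        · refine ⟨_, _, Sum.inr (Sum.inr (t, s)), rfl, rfl, ⟨b', Or.inl ⟨rfl, rfl⟩⟩, ?_, ?_, b', ?_⟩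
            <;> simp [Walk.edges, hq₁, hb']
        · have := start_mem_support q₂
          simp [hs₂, this] at hnd

/-! ### Counting paths across partitions -/

/-- A connected multigraph on `A` has at least `|A| - 1` edges. -/
lemma card_le_of_connected {A : Type} [Fintype A] (D : Finset (A × A))
    (h : ∀ x y, Relation.EqvGen (fun x y => (x, y) ∈ D) x y) :
    Fintype.card A ≤ D.card + 1 := by
  classical
  rcases isEmpty_or_nonempty A with hA | hA
  · simp
  let G : SimpleGraph A := SimpleGraph.fromRel fun x y => (x, y) ∈ D
  have hreach : ∀ x y, G.Reachable x y := by
    intro x y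
    induction h x y with
    | rel x y hxy =>
      by_cases hne : x = y
      · subst hne; exact SimpleGraph.Reachable.refl _
      · exact SimpleGraph.Adj.reachable ((SimpleGraph.fromRel_adj _ _ _).2 ⟨hne, Or.inl hxy⟩)
    | refl x => exact SimpleGraph.Reachable.refl _
    | symm x y _ ih => exact ih.symm
    | trans x y z _ _ ih1 ih2 => exact ih1.trans ih2
  have hG : G.Connected := ⟨hreach⟩
  have h1 := hG.card_vert_le_card_edgeSet_add_one
  have h2 : Nat.card G.edgeSet ≤ D.card := by
    have hsub : G.edgeSet ⊆ ((D.image fun p => s(p.1, p.2) : Finset (Sym2 A)) : Set (Sym2 A)) := by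
      intro a
      induction a with
      | h x y =>
        intro hxy
        rw [SimpleGraph.mem_edgeSet, SimpleGraph.fromRel_adj] at hxy
        simp only [Finset.coe_image, Set.mem_image, Finset.mem_coe, Prod.exists]
        rcases hxy.2 with h' | h'
        · exact ⟨x, y, h', rfl⟩
        · exact ⟨y, x, h', Sym2.eq_swap⟩
    calc Nat.card G.edgeSet = G.edgeSet.ncard := rfl
      _ ≤ ((D.image fun p => s(p.1, p.2) : Finset (Sym2 A)) : Set (Sym2 A)).ncard :=
        Set.ncard_le_ncard hsub (Finset.finite_toSet _)
      _ = (D.image fun p => s(p.1, p.2)).card := Set.ncard_coe_finset _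
      _ ≤ D.card := Finset.card_image_le
  rw [Nat.card_eq_fintype_card] at h1
  omega

/-- The data extracted from a family of `k` edge-disjoint connectors: `cnt K` is the number of
paths of kind `K`. At most one path of the family passes through each vertex `side e s` and
through each leg; and for every set `R` of pairs of terminals, contracting these pairs leaves at
least `k (|T| - |R| - 1)` paths, where the paths whose kind satisfies `P` are those that may
survive the contraction. -/
structure Census (σ : Equiv.Perm ι) (zed : ι → Bool) (x₀ : Fin r) [Fintype ι] (k : ℕ)
    (cnt : Kind ι r → ℕ) : Prop where
  side_le : ∀ e s, cnt (Sum.inl (e, s)) + cnt (Sum.inr (Sum.inl e)) ≤ 1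
  special_le : ∀ t s, cnt (Sum.inl (cl x₀ t, s)) + cnt (Sum.inr (Sum.inl (cl x₀ t))) +
    cnt (Sum.inr (Sum.inr (t, s))) ≤ 1
  leg_le : ∀ t, cnt (Sum.inr (Sum.inr (t, false))) + cnt (Sum.inr (Sum.inr (t, true))) ≤ 1
  crossing : ∀ (P : Kind ι r → Bool) (R : Finset (Term ι × Term ι)),
    (∀ K τ₁ τ₂, KindEnds σ zed x₀ τ₁ τ₂ K → P K = false →
      Relation.EqvGen (fun x y => (x, y) ∈ R) τ₁ τ₂) →
    k * Fintype.card (Term ι) ≤ (∑ K, if P K then cnt K else 0) + k * R.card + k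

/-- A family of `k` edge-disjoint connectors has a census, each connector being connected after the
contraction. -/
lemma exists_census [Fintype ι] (k : ℕ) (Q : Fin k → Set (Edge ι r))
    (hQ : ∀ j, IsConnector (inc σ zed x₀) (terms ι r) (Q j))
    (hdis : Pairwise fun i j => Disjoint (Q i) (Q j)) :
    ∃ cnt, Census σ zed x₀ k cnt := by
  classical
  choose m a b p hp hpd hC hconn using hQ
  choose α β κ hα hβ hends hedges using fun j i => classify (p j i) (hp j i)
  let I := Σ j, Fin (m j)
  let κ' : I → Kind ι r := fun i => κ i.1 i.2
  have hdisj : ∀ i i' : I, i ≠ i' → ∀ e ∈ (p i.1 i.2).edges, e ∉ (p i'.1 i'.2).edges := by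
    rintro ⟨j, i⟩ ⟨j', i'⟩ hne e he he'
    by_cases hj : j = j'
    · subst hj
      exact hpd j i i' (fun h => hne (by rw [h])) e he he'
    · have h1 : e ∈ Q j := by rw [hC]; exact ⟨i, he⟩
      have h2 : e ∈ Q j' := by rw [hC]; exact ⟨i', he'⟩
      exact Set.disjoint_left.1 (hdis hj) h1 h2
  have hsum : ∀ A : Finset (Kind ι r),
      ∑ K ∈ A, (Finset.univ.filter fun i => κ' i = K).card =
        (Finset.univ.filter fun i => κ' i ∈ A).card := by
    intro A
    rw [Finset.card_eq_sum_card_fiberwise (f := κ') (t := A) (fun i hi => by simpa using hi)]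
    refine Finset.sum_congr rfl fun K hK => ?_
    congr 1
    ext i
    simp only [Finset.mem_filter, Finset.mem_univ, true_and]
    exact ⟨fun h => ⟨h ▸ hK, h⟩, fun h => h.2⟩
  have hone : ∀ A : Finset (Kind ι r),
      (∀ i i' : I, κ' i ∈ A → κ' i' ∈ A → i = i') →
      ∑ K ∈ A, (Finset.univ.filter fun i => κ' i = K).card ≤ 1 := by
    intro A hA
    rw [hsum, Finset.card_le_one]
    intro i hi i' hi'
    simp only [Finset.mem_filter, Finset.mem_univ, true_and] at hi hi'
    exact hA i i' hi hi'
  have htouch : ∀ (e : Elem ι r) (s : Bool) (A : Finset (Kind ι r)),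
      (∀ K ∈ A, Touch x₀ e s K) →
      ∑ K ∈ A, (Finset.univ.filter fun i => κ' i = K).card ≤ 1 := by
    intro e s A hA
    refine hone A fun i i' hi hi' => ?_
    by_contra hne
    exact kind_conflict (hedges i.1 i.2) (hedges i'.1 i'.2) (hA _ hi) (hA _ hi') (hdisj i i' hne)
  refine ⟨fun K => (Finset.univ.filter fun i => κ' i = K).card, ?_, ?_, ?_, ?_⟩
  · intro e s
    have := htouch e s {Sum.inl (e, s), Sum.inr (Sum.inl e)} (by simp [Touch])
    rwa [Finset.sum_pair (by simp)] at this
  · intro t s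
    have := htouch (cl x₀ t) s {Sum.inl (cl x₀ t, s), Sum.inr (Sum.inl (cl x₀ t)),
      Sum.inr (Sum.inr (t, s))} (by simp [Touch])
    rwa [Finset.sum_insert (by simp), Finset.sum_pair (by simp), ← add_assoc] at this
  · intro t
    have := hone {Sum.inr (Sum.inr (t, false)), Sum.inr (Sum.inr (t, true))} (by
      intro i i' hi hi'
      by_contra hne
      have hleg : ∀ i : I, κ' i ∈ ({Sum.inr (Sum.inr (t, false)), Sum.inr (Sum.inr (t, true))} :
          Finset (Kind ι r)) → leg t ∈ (p i.1 i.2).edges := by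
        intro i hi
        have he := hedges i.1 i.2
        simp only [Finset.mem_insert, Finset.mem_singleton, κ'] at hi
        rcases hi with hi | hi <;> · rw [hi] at he; exact he.1
      exact hdisj i i' hne _ (hleg i hi) (hleg i' hi'))
    rwa [Finset.sum_pair (by simp)] at this
  · intro P R hPR
    have hj : ∀ j, Fintype.card (Term ι) ≤
        (Finset.univ.filter fun i => P (κ j i) = true).card + R.card + 1 := by
      intro j
      set D : Finset (Term ι × Term ι) :=
        (Finset.univ.filter fun i => P (κ j i) = true).image (fun i => (α j i, β j i)) ∪ R with hD
      have hpath : ∀ i, Relation.EqvGen (fun x y => (x, y) ∈ D) (α j i) (β j i) := by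
        intro i
        by_cases hi : P (κ j i) = true
        · refine Relation.EqvGen.rel _ _ (Finset.mem_union_left _ ?_)
          exact Finset.mem_image.2 ⟨i, by simpa using hi, rfl⟩
        · exact (hPR _ _ _ (hends j i) (by simpa using hi)).mono
            fun x y h => Finset.mem_union_right _ h
      have hcon : ∀ x y, Relation.EqvGen (fun x y => (x, y) ∈ D) x y := by
        intro x y
        have hxy := hconn j (term x) ⟨x, rfl⟩ (term y) ⟨y, rfl⟩
        have : ∀ w, Relation.ReflTransGen (fun x y => ∃ i, (a j i = x ∧ b j i = y) ∨
            (a j i = y ∧ b j i = x)) (term x) w →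
            ∃ z, w = term z ∧ Relation.EqvGen (fun x y => (x, y) ∈ D) x z := by
          intro w hw
          induction hw with
          | refl => exact ⟨x, rfl, Relation.EqvGen.refl _⟩
          | tail _ hstep ih =>
            obtain ⟨z, rfl, hz⟩ := ih
            obtain ⟨i, ⟨h1, rfl⟩ | ⟨rfl, h2⟩⟩ := hstep
            · rw [hα j i] at h1
              cases h1
              exact ⟨_, hβ j i, hz.trans _ _ _ (hpath i)⟩
            · rw [hβ j i] at h2
              cases h2
              exact ⟨_, hα j i, hz.trans _ _ _ ((hpath i).symm _ _)⟩
        obtain ⟨z, hz, h⟩ := this _ hxy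
        cases hz
        exact h
      have h1 := card_le_of_connected D hcon
      have h2 : D.card ≤ (Finset.univ.filter fun i => P (κ j i) = true).card + R.card :=
        (Finset.card_union_le _ _).trans (Nat.add_le_add_right Finset.card_image_le _)
      omega
    have h1 : (∑ K, if P K = true then (Finset.univ.filter fun i => κ' i = K).card else 0) =
        ∑ j, (Finset.univ.filter fun i => P (κ j i) = true).card := by
      rw [← Finset.sum_filter, hsum]
      simp only [Finset.card_filter, Finset.mem_filter, Finset.mem_univ, true_and]
      exact Fintype.sum_sigma _
    have h2 := Finset.sum_le_sum fun j (_ : j ∈ (Finset.univ : Finset (Fin k))) => hj j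
    simp only [Finset.sum_add_distrib, Finset.sum_const, Finset.card_univ, Fintype.card_fin,
      smul_eq_mul, mul_one] at h2
    simp only [h1]
    exact h2

/-! ### The contradiction -/

/-- The bookkeeping inside one segment, for `k = 2 h`, that combines a coarse and a fine partition of
the terminals. Here `f i` is the number of paths crossing the link `i` (which enters the node `i`),
`R i` and `L i` are the numbers of paths joining the two terminals of a node through that link at
its end and at its start, and `m` is the number of paths using the leg. In the coarse partition the
two terminals of a node `i` are identified unless `W i`, and the ends of the link `i` are identified
if `S i`; in the fine partition only the terminals of the nodes with `P i` are identified. The last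
clause bounds the paths surviving in the two partitions, plus `k` times the number of
identifications, by `20 k`. -/
def Marking (h : ℕ) (f R L : Fin 5 → ℕ) (m : ℕ) (S W P : Fin 5 → Bool) : Prop :=
  W 4 = false ∧ P 4 = false ∧ (∀ i, S i = true → W i = false ∧ W (i - 1) = false) ∧
    ((∑ i, if W i then R i else 0) + (∑ i, if W (i - 1) then L i else 0) +
        (∑ i, if S i then 0 else f i) + m) +
      ((∑ i, if P i then 0 else R i) + (∑ i, if P (i - 1) then 0 else L i) + (∑ i, f i) + m) +
      2 * h * ((∑ i, if W i then 0 else 1) + (∑ i, if S i then 1 else 0) +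
        (∑ i, if P i then 1 else 0)) ≤ 40 * h

/-- A suitable marking of a segment exists. Nothing has to be marked if the leg is not used or if some
connection has a side that no path uses. Otherwise a single mark suffices, unless
`R 1 = L 2 = R 2 = L 3 = h`, which is impossible as the leg makes `L 2` and `R 2` differ by one. -/
lemma segment_bound (h : ℕ) (f R L : Fin 5 → ℕ) (u w : ℕ)
    (hR : ∀ i, f i + R i ≤ 3 * h) (hL : ∀ i, f i + L i ≤ 3 * h)
    (hu : f 2 + L 2 + u ≤ 3 * h) (hw : f 2 + R 2 + w ≤ 3 * h) (huw : u + w ≤ 1) :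
    ∃ S W P : Fin 5 → Bool, Marking h f R L (u + w) S W P := by
  have e0 : (0 : Fin 5) - 1 = 4 := rfl
  have e2 : (2 : Fin 5) - 1 = 1 := rfl
  have e3 : (3 : Fin 5) - 1 = 2 := rfl
  have e4 : (4 : Fin 5) - 1 = 3 := rfl
  have R0 := hR 0
  have R1 := hR 1
  have R2 := hR 2
  have R3 := hR 3
  have R4 := hR 4
  have L0 := hL 0
  have L1 := hL 1
  have L2 := hL 2
  have L3 := hL 3
  have L4 := hL 4
  let N : Fin 5 → Bool := fun _ => false
  let X : Fin 5 → Fin 5 → Bool := fun j i => decide (i = j)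
  by_cases hslack : 2 * (∑ i, f i) + (∑ i, R i) + (∑ i, L i) + 2 * (u + w) ≤ 30 * h
  · refine ⟨N, N, N, rfl, rfl, fun i hi => ⟨rfl, rfl⟩, ?_⟩
    simp only [Fin.sum_univ_five, N] at hslack ⊢
    simp
    omega
  simp only [Fin.sum_univ_five] at hslack
  have hS : ∀ j : Fin 5, 2 * h < f j → j ≠ 2 → _ := fun j hj hj2 =>
    (⟨X j, N, N, rfl, rfl, fun i hi => ⟨rfl, rfl⟩, by
      fin_cases j <;> simp [Fin.sum_univ_five, N, X] at hj hj2 ⊢ <;> omega⟩ :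
    ∃ S W P : Fin 5 → Bool, Marking h f R L (u + w) S W P)
  have hP : ∀ j : Fin 5, j ≠ 4 → 2 * h < R j + L (j + 1) → _ := fun j hj4 hj =>
    (⟨N, N, X j, rfl, by simpa [X] using hj4.symm, fun i hi => ⟨rfl, rfl⟩, by
      fin_cases j <;> simp [Fin.sum_univ_five, N, X, e0, e2, e3, e4] at hj hj4 ⊢ <;> omega⟩ :
    ∃ S W P : Fin 5 → Bool, Marking h f R L (u + w) S W P)
  have hW : ∀ j : Fin 5, j ≠ 4 → R j + L (j + 1) < 2 * h → _ := fun j hj4 hj =>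
    (⟨N, X j, N, by simpa [X] using hj4.symm, rfl, fun i hi => by simp [N] at hi, by
      fin_cases j <;> simp [Fin.sum_univ_five, N, X, e0, e2, e3, e4] at hj hj4 ⊢ <;> omega⟩ :
    ∃ S W P : Fin 5 → Bool, Marking h f R L (u + w) S W P)
  have a1 : (0 : Fin 5) + 1 = 1 := rfl
  have a2 : (1 : Fin 5) + 1 = 2 := rfl
  have a3 : (2 : Fin 5) + 1 = 3 := rfl
  have a4 : (3 : Fin 5) + 1 = 4 := rfl
  by_contra hcon
  have S0 := fun H => hcon (hS 0 H (by decide))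
  have S1 := fun H => hcon (hS 1 H (by decide))
  have S3 := fun H => hcon (hS 3 H (by decide))
  have S4 := fun H => hcon (hS 4 H (by decide))
  have P0 := fun H => hcon (hP 0 (by decide) H)
  have P1 := fun H => hcon (hP 1 (by decide) H)
  have P2 := fun H => hcon (hP 2 (by decide) H)
  have P3 := fun H => hcon (hP 3 (by decide) H)
  have W1 := fun H => hcon (hW 1 (by decide) H)
  have W2 := fun H => hcon (hW 2 (by decide) H)
  rw [a1] at P0
  rw [a2] at P1 W1
  rw [a3] at P2 W2
  rw [a4] at P3
  rw [imp_false] at S0 S1 S3 S4 P0 P1 P2 P3 W1 W2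
  clear hS hP hW hcon hR hL
  omega

lemma sum_kind [Fintype ι] (g : Kind ι r → ℕ) :
    ∑ K, g K = ∑ t, ((∑ i, ∑ x, g (Sum.inl (((t, i), x), true))) +
      (∑ i, ∑ x, g (Sum.inl (((t, i), x), false))) +
      (∑ i, ∑ x, g (Sum.inr (Sum.inl ((t, i), x)))) +
      (g (Sum.inr (Sum.inr (t, false))) + g (Sum.inr (Sum.inr (t, true))))) := by
  simp only [Fintype.sum_sum_type, Fintype.sum_prod_type, Fintype.sum_bool, Finset.sum_add_distrib]
  ring

/-- The census of `2 h` connectors is contradictory: each segment contributes at most `20 k` to the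
sum of the counts for the coarse and the fine partition, whereas its ten terminals ask for `20 k`
and the two exceptional terminals for `4 k` more, of which only `2 k` are excused. -/
lemma census_false [Fintype ι] {h : ℕ} (hh : 0 < h) {x₀ : Fin (3 * h)}
    {cnt : Kind ι (3 * h) → ℕ} (hc : Census σ zed x₀ (2 * h) cnt) : False := by
  classical
  let f : ι → Fin 5 → ℕ := fun t i => ∑ x, cnt (Sum.inr (Sum.inl ((t, i), x)))
  let R : ι → Fin 5 → ℕ := fun t i => ∑ x, cnt (Sum.inl (((t, i), x), true))
  let L : ι → Fin 5 → ℕ := fun t i => ∑ x, cnt (Sum.inl (((t, i), x), false))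
  have hside : ∀ t i s, (∑ x, cnt (Sum.inr (Sum.inl ((t, i), x)))) +
      ∑ x, cnt (Sum.inl (((t, i), x), s)) ≤ 3 * h := by
    intro t i s
    rw [← Finset.sum_add_distrib]
    calc _ ≤ ∑ x : Fin (3 * h), 1 := Finset.sum_le_sum fun x _ => by
            rw [add_comm]; exact hc.side_le _ _
      _ = 3 * h := by simp
  have hspecial : ∀ t s, (∑ x, cnt (Sum.inr (Sum.inl ((t, 2), x)))) +
      (∑ x, cnt (Sum.inl (((t, 2), x), s))) + cnt (Sum.inr (Sum.inr (t, s))) ≤ 3 * h := by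
    intro t s
    have hx : cnt (Sum.inr (Sum.inr (t, s))) =
        ∑ x, if x = x₀ then cnt (Sum.inr (Sum.inr (t, s))) else 0 := by simp
    rw [hx, ← Finset.sum_add_distrib, ← Finset.sum_add_distrib]
    calc _ ≤ ∑ x : Fin (3 * h), 1 := Finset.sum_le_sum fun x _ => by
            split_ifs with hxx
            · subst hxx
              have := hc.special_le t s
              simp only [cl] at this
              omega
            · have := hc.side_le ((t, 2), x) s
              omega
      _ = 3 * h := by simp
  choose S W P hW4 hP4 hSW hbound using fun t => segment_bound h (f t) (R t) (L t)
    (cnt (Sum.inr (Sum.inr (t, false)))) (cnt (Sum.inr (Sum.inr (t, true))))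
    (fun i => hside t i true) (fun i => hside t i false) (hspecial t false) (hspecial t true)
    (hc.leg_le t)
  have hpv : ∀ M : ι → Fin 5 → Bool, (∀ t, M t 4 = false) → ∀ v : Node ι,
      M (pv σ v).1 (pv σ v).2 = M v.1 (v.2 - 1) := by
    rintro M hM ⟨t, i⟩
    by_cases hi : i = 0
    · subst hi
      have : (0 : Fin 5) - 1 = 4 := rfl
      simp [pv, this, hM]
    · simp [pv, hi]
  let id₁ : Node ι → Term ι × Term ι := fun v => (Sum.inl (v, false), Sum.inl (v, true))
  have hid : ∀ (D : Finset (Term ι × Term ι)) v, id₁ v ∈ D →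
      ∀ b b', Relation.EqvGen (fun x y => (x, y) ∈ D) (Sum.inl (v, b)) (Sum.inl (v, b')) := by
    intro D v hv b b'
    cases b <;> cases b'
    · exact Relation.EqvGen.refl _
    · exact Relation.EqvGen.rel _ _ hv
    · exact (Relation.EqvGen.rel _ _ hv).symm
    · exact Relation.EqvGen.refl _
  let R₁ : Finset (Term ι × Term ι) :=
    (Finset.univ.filter fun v : Node ι => W v.1 v.2 = false).image id₁ ∪
      (Finset.univ.filter fun v : Node ι => S v.1 v.2 = true).image
        fun v => (Sum.inl (pv σ v, false), Sum.inl (v, false))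
  let R₂ : Finset (Term ι × Term ι) :=
    (Finset.univ.filter fun v : Node ι => P v.1 v.2 = true).image id₁
  have hR₁ : R₁.card ≤ ∑ t, ((∑ i, if W t i then 0 else 1) + ∑ i, if S t i then 1 else 0) := by
    refine (Finset.card_union_le _ _).trans ?_
    refine (Nat.add_le_add Finset.card_image_le Finset.card_image_le).trans ?_
    rw [Finset.card_filter, Finset.card_filter, Fintype.sum_prod_type, Fintype.sum_prod_type,
      ← Finset.sum_add_distrib]
    refine Finset.sum_le_sum fun t _ => Nat.add_le_add ?_ le_rfl
    refine Finset.sum_le_sum fun i _ => ?_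
    cases W t i <;> simp
  have hR₂ : R₂.card ≤ ∑ t, ∑ i, if P t i then 1 else 0 := by
    refine Finset.card_image_le.trans ?_
    rw [Finset.card_filter, Fintype.sum_prod_type]
  have hmem₁ : ∀ v : Node ι, W v.1 v.2 = false → id₁ v ∈ R₁ := fun v hv =>
    Finset.mem_union_left _ (Finset.mem_image_of_mem _ (by simpa using hv))
  have hlink : ∀ v : Node ι, S v.1 v.2 = true → ∀ b b',
      Relation.EqvGen (fun x y => (x, y) ∈ R₁) (Sum.inl (pv σ v, b)) (Sum.inl (v, b')) := by
    intro v hv b b'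
    have hw := hSW v.1 v.2 hv
    have hm : ((Sum.inl (pv σ v, false), Sum.inl (v, false)) : Term ι × Term ι) ∈ R₁ :=
      Finset.mem_union_right _ (Finset.mem_image.2 ⟨v, by simpa using hv, rfl⟩)
    refine (hid R₁ _ (hmem₁ _ ?_) b false).trans _ _ _
      ((Relation.EqvGen.rel _ _ hm).trans _ _ _ (hid R₁ _ (hmem₁ _ hw.1) false b'))
    rw [hpv W hW4]
    exact hw.2
  have hcoarse := hc.crossing (fun K => match K with
    | Sum.inl (e, s) => W (node σ e s).1 (node σ e s).2
    | Sum.inr (Sum.inl e) => !S e.1.1 e.1.2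
    | Sum.inr (Sum.inr _) => true) R₁ (by
      rintro (⟨e, s⟩ | e | ⟨t, s⟩) τ₁ τ₂ hK hP
      · obtain ⟨b, rfl, rfl⟩ := hK
        exact hid _ _ (hmem₁ _ hP) _ _
      · obtain ⟨s, b, b', rfl, rfl⟩ := hK
        have hS : S e.1.1 e.1.2 = true := by simpa using hP
        cases s
        · exact hlink e.1 hS b b'
        · exact (hlink e.1 hS b' b).symm
      · exact absurd hP (by simp))
  have hfine := hc.crossing (fun K => match K with
    | Sum.inl (e, s) => !P (node σ e s).1 (node σ e s).2
    | Sum.inr _ => true) R₂ (by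
      rintro (⟨e, s⟩ | e) τ₁ τ₂ hK hP
      · obtain ⟨b, rfl, rfl⟩ := hK
        refine hid _ _ (Finset.mem_image_of_mem _ ?_) _ _
        simpa using hP
      · exact absurd hP (by simp))
  rw [sum_kind] at hcoarse hfine
  have hpull : ∀ (c : Bool) (g : Fin (3 * h) → ℕ),
      (∑ x, if c = true then g x else 0) = if c = true then ∑ x, g x else 0 := by
    intro c g; cases c <;> simp
  have hpull' : ∀ (c : Bool) (g : Fin (3 * h) → ℕ),
      (∑ x, if c = true then 0 else g x) = if c = true then 0 else ∑ x, g x := by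
    intro c g; cases c <;> simp
  have hnot : ∀ (c : Bool) (a : ℕ), (if (!c) = true then a else 0) = if c = true then 0 else a := by
    intro c a; cases c <;> rfl
  simp only [node, if_true, Bool.false_eq_true, if_false, hpv W hW4, hpull, hpull', hnot] at hcoarse
  simp only [node, if_true, Bool.false_eq_true, if_false, hpv P hP4, hpull', hnot] at hfine
  have htotal := Finset.sum_le_sum fun t (_ : t ∈ (Finset.univ : Finset ι)) => hbound t
  have hk₁ := Nat.mul_le_mul_left (2 * h) hR₁
  have hk₂ := Nat.mul_le_mul_left (2 * h) hR₂
  simp only [Finset.sum_const, Finset.card_univ, smul_eq_mul] at htotal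
  simp only [Finset.sum_add_distrib, ← Finset.mul_sum, mul_add] at htotal hcoarse hfine hk₁ hk₂
  have hcard : Fintype.card (Term ι) = 10 * Fintype.card ι + 2 := by
    simp [Node]; ring
  rw [hcard] at hcoarse hfine
  have hexp : 2 * h * (10 * Fintype.card ι + 2) = 20 * (h * Fintype.card ι) + 4 * h := by ring
  have hexp' : Fintype.card ι * (40 * h) = 40 * (h * Fintype.card ι) := by ring
  simp only [f, R, L] at htotal
  rw [hexp] at hcoarse hfine
  rw [hexp'] at htotal
  clear hR₁ hR₂ hbound
  omega

/-! ### Connectivity of the terminals -/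

/-- Adjacency of vertices after deleting the edges in `S`. -/
def Step (σ : Equiv.Perm ι) (zed : ι → Bool) (x₀ : Fin r) (S : Finset (Edge ι r))
    (x y : Vert ι r) : Prop := ∃ e, e ∉ S ∧ inc σ zed x₀ e = s(x, y)

/-- Being joined by a walk avoiding the edges in `S`. -/
def Joined (σ : Equiv.Perm ι) (zed : ι → Bool) (x₀ : Fin r) (S : Finset (Edge ι r)) :
    Vert ι r → Vert ι r → Prop := Relation.ReflTransGen (Step σ zed x₀ S)

variable {S : Finset (Edge ι r)}

lemma Joined.symm {x y : Vert ι r} (h : Joined σ zed x₀ S x y) : Joined σ zed x₀ S y x := by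
  have : Std.Symm (Step σ zed x₀ S) := ⟨fun _ _ ⟨e, he, hi⟩ => ⟨e, he, hi.trans Sym2.eq_swap⟩⟩
  exact Relation.ReflTransGen.stdSymm.symm _ _ h

lemma Joined.trans {x y z : Vert ι r} (h : Joined σ zed x₀ S x y) (h' : Joined σ zed x₀ S y z) :
    Joined σ zed x₀ S x z := Relation.ReflTransGen.trans h h'

lemma Joined.walk {x y : Vert ι r} (h : Joined σ zed x₀ S x y) :
    ∃ p : Walk (inc σ zed x₀) x y, ∀ e ∈ p.edges, e ∉ S := by
  induction h using Relation.ReflTransGen.head_induction_on with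
  | refl => exact ⟨Walk.nil _, by simp [Walk.edges]⟩
  | head hstep _ ih =>
    obtain ⟨e, he, hi⟩ := hstep
    obtain ⟨p, hp⟩ := ih
    refine ⟨Walk.cons e hi p, ?_⟩
    simp only [Walk.edges, List.mem_cons]
    rintro a (rfl | ha)
    exacts [he, hp a ha]

lemma joined_edge {e : Edge ι r} {x y : Vert ι r} (he : e ∉ S) (hi : inc σ zed x₀ e = s(x, y)) :
    Joined σ zed x₀ S x y := Relation.ReflTransGen.single ⟨e, he, hi⟩

lemma pigeon {A B D : Type} [Fintype A] (S : Finset B) (F : B → D) (G : A → D)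
    (hG : Function.Injective G) (h : ∀ a, ∃ e ∈ S, F e = G a) : Fintype.card A ≤ S.card := by
  choose g hg hF using h
  refine Finset.card_le_card_of_injOn g (fun a _ => hg a) fun a _ a' _ haa => hG ?_
  rw [← hF, ← hF, haa]

/-- The side of a connection to which an edge is assigned when disjoint paths are counted. -/
def site (x₀ : Fin r) : Edge ι r → Elem ι r × Bool
  | att e s _ => (e, s)
  | arm e s => (e, s)
  | leg t => (cl x₀ t, true)

lemma pv_surj (v : Node ι) : ∃ l, pv σ l = v := by
  obtain ⟨t, i⟩ := v
  by_cases hi : i = 4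
  · subst hi
    exact ⟨(σ.symm t, 0), by simp [pv]; rfl⟩
  · refine ⟨(t, i + 1), ?_⟩
    have : i + 1 ≠ 0 := by revert hi; revert i; decide
    simp [pv, this]

/-- The two terminals of a node are joined by `2 r` edge-disjoint paths of length two. -/
lemma joined_node (hS : S.card < 2 * r) (v : Node ι) (b b' : Bool) :
    Joined σ zed x₀ S (term (Sum.inl (v, b))) (term (Sum.inl (v, b'))) := by
  obtain ⟨l, hl⟩ := pv_surj (σ := σ) v
  by_contra hcon
  have hcard := pigeon (A := Fin r × Bool) S (site x₀)
    (fun a => (((if a.2 then v else l), a.1), a.2)) (by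
      rintro ⟨x, s⟩ ⟨x', s'⟩ h
      simp only [Prod.mk.injEq] at h
      exact Prod.ext h.1.2 h.2) (by
      rintro ⟨x, s⟩
      set e : Elem ι r := ((if s then v else l), x) with he
      have hv : node σ e s = v := by cases s <;> simp [node, he, hl]
      by_contra hno
      push Not at hno
      have hatt : ∀ c, Joined σ zed x₀ S (side e s) (term (Sum.inl (v, c))) := fun c =>
        joined_edge (e := att e s c) (fun hmem => hno _ hmem rfl) (by rw [inc, hv])
      exact hcon ((hatt b).symm.trans (hatt b')))
  simp at hcard
  omega

/-- Cutting a link takes an edge from each of its `r` connections, so fewer than `2 r` deleted edges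
cannot cut two different links. -/
lemma joined_link (hS : S.card < 2 * r) {l l' : Node ι} (hne : l ≠ l') :
    Joined σ zed x₀ S (term (Sum.inl (pv σ l, true))) (term (Sum.inl (l, true))) ∨
    Joined σ zed x₀ S (term (Sum.inl (pv σ l', true))) (term (Sum.inl (l', true))) := by
  by_contra hcon
  have hcon' : ∀ c : Bool, ¬ Joined σ zed x₀ S
      (term (Sum.inl (pv σ (if c then l else l'), true)))
      (term (Sum.inl ((if c then l else l'), true))) := by
    push Not at hcon
    intro c; cases c
    exacts [hcon.2, hcon.1]
  have hcard := pigeon (A := Fin r × Bool) S (fun e => (site x₀ e).1)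
    (fun a => ((if a.2 then l else l'), a.1)) (by
      rintro ⟨x, s⟩ ⟨x', s'⟩ h
      simp only [Prod.mk.injEq] at h
      refine Prod.ext h.2 ?_
      cases s <;> cases s' <;> simp_all) (by
      rintro ⟨x, c⟩
      have hc := hcon' c
      simp only
      generalize (if c = true then l else l') = m at hc ⊢
      by_contra hno
      push Not at hno
      have harm : ∀ s, Joined σ zed x₀ S (term (Sum.inl (node σ (m, x) s, true))) (mid (m, x)) :=
        fun s => (joined_edge (e := att (m, x) s true) (fun hmem => hno _ hmem rfl) rfl).symm.trans
          (joined_edge (e := arm (m, x) s) (fun hmem => hno _ hmem rfl) rfl)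
      exact hc ((harm false).trans (harm true).symm))
  simp at hcard
  omega

/-- An exceptional terminal is joined to the ring by the disjoint paths through its legs. -/
lemma joined_exceptional (hS : S.card < 2 * r) {z : Bool} {g : Fin (2 * r) → ι}
    (hg : Function.Injective g) (hz : ∀ i, zed (g i) = z) :
    ∃ v, Joined σ zed x₀ S (term (Sum.inr z)) (term (Sum.inl (v, true))) := by
  by_contra hcon
  have hcard := pigeon (A := Fin (2 * r)) S (fun e => (site x₀ e).1)
    (fun i => cl x₀ (g i)) (fun i j h => hg (by simpa [cl] using h)) (by
      intro i
      by_contra hno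
      push Not at hno
      have h₁ := joined_edge (σ := σ) (zed := zed) (x₀ := x₀) (e := leg (g i))
        (fun hmem => hno _ hmem rfl) rfl
      have h₂ := joined_edge (σ := σ) (zed := zed) (x₀ := x₀) (e := arm (cl x₀ (g i)) true)
        (fun hmem => hno _ hmem rfl) rfl
      have h₃ := joined_edge (σ := σ) (zed := zed) (x₀ := x₀) (e := att (cl x₀ (g i)) true true)
        (fun hmem => hno _ hmem rfl) rfl
      rw [hz] at h₁
      exact hcon ⟨_, h₁.symm.trans (h₂.symm.trans h₃)⟩)
  simp at hcard
  omega

lemma pv_reach (hσ : ∀ t t', Relation.ReflTransGen (fun x y => y = σ x) t t') (v w : Node ι) :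
    Relation.ReflTransGen (fun x y => y = pv σ x) v w := by
  have hdown : ∀ (t : ι) (j i : Fin 5), i ≤ j →
      Relation.ReflTransGen (fun x y => y = pv σ x) (t, j) (t, i) := by
    intro t j
    induction j using Fin.induction with
    | zero => intro i hi; obtain rfl : i = 0 := by simpa using hi
              exact Relation.ReflTransGen.refl
    | succ j ih =>
      intro i hi
      rcases hi.eq_or_lt with rfl | hlt
      · exact Relation.ReflTransGen.refl
      · have hpred : j.castSucc = j.succ - 1 := by
          clear * -
          revert j
          decide
        refine Relation.ReflTransGen.head ?_ (ih i (Fin.le_castSucc_iff.2 hlt))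
        simp [pv, hpred]
  have hwrap : ∀ t i, Relation.ReflTransGen (fun x y => y = pv σ x) (t, 0) (σ t, i) := by
    intro t i
    refine Relation.ReflTransGen.head (b := (σ t, 4)) (by simp [pv]; rfl) (hdown _ _ _ ?_)
    exact Fin.le_last i
  have hzero : ∀ t t', Relation.ReflTransGen (fun x y => y = pv σ x) (t, 0) (t', 0) := by
    intro t t'
    induction hσ t t' with
    | refl => exact Relation.ReflTransGen.refl
    | tail _ h ih => subst h; exact ih.trans (hwrap _ 0)
  have h := hwrap (σ.symm w.1) w.2
  rw [Equiv.apply_symm_apply] at h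
  exact ((hdown v.1 v.2 0 (Fin.zero_le _)).trans (hzero _ _)).trans h

lemma edgeConnected (hσ : ∀ t t', Relation.ReflTransGen (fun x y => y = σ x) t t')
    (hzed : ∀ z, ∃ g : Fin (2 * r) → ι, Function.Injective g ∧ ∀ i, zed (g i) = z) :
    EdgeConnectedIn (inc σ zed x₀) (terms ι r) (2 * r) := by
  intro S hS t₁ ht₁ t₂ ht₂
  -- on the ring, all links except possibly one survive
  have hring : ∃ l₀ : Node ι, ∀ v : Node ι,
      Joined σ zed x₀ S (term (Sum.inl (v, true))) (term (Sum.inl (l₀, true))) := by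
    obtain ⟨l₀, hl₀⟩ : ∃ l₀ : Node ι, ∀ l, l ≠ l₀ →
        Joined σ zed x₀ S (term (Sum.inl (pv σ l, true))) (term (Sum.inl (l, true))) := by
      by_cases hbad : ∃ l₀ : Node ι,
          ¬ Joined σ zed x₀ S (term (Sum.inl (pv σ l₀, true))) (term (Sum.inl (l₀, true)))
      · obtain ⟨l₀, h⟩ := hbad
        exact ⟨l₀, fun l hl => (joined_link hS hl).resolve_right h⟩
      · push Not at hbad
        obtain ⟨g, -⟩ := hzed true
        exact ⟨(g ⟨0, by omega⟩, 0), fun l _ => hbad l⟩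
    refine ⟨l₀, fun v => ?_⟩
    induction pv_reach hσ v l₀ using Relation.ReflTransGen.head_induction_on with
    | refl => exact Relation.ReflTransGen.refl
    | @head v w h _ ih =>
      subst h
      by_cases hv : v = l₀
      · subst hv; exact Relation.ReflTransGen.refl
      · exact (hl₀ v hv).symm.trans ih
  obtain ⟨l₀, hl₀⟩ := hring
  have hall : ∀ τ : Term ι, Joined σ zed x₀ S (term τ) (term (Sum.inl (l₀, true))) := by
    rintro (⟨v, b⟩ | z)
    · exact (joined_node hS v b true).trans (hl₀ v)
    · obtain ⟨g, hg, hz⟩ := hzed z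
      obtain ⟨v, hv⟩ := joined_exceptional (σ := σ) (x₀ := x₀) hS hg hz
      exact hv.trans (hl₀ v)
  obtain ⟨τ₁, rfl⟩ := ht₁
  obtain ⟨τ₂, rfl⟩ := ht₂
  exact ((hall τ₁).trans (hall τ₂).symm).walk

instance [Finite ι] : Finite (Vert ι r) := by
  refine Finite.of_surjective (α := Term ι ⊕ (Elem ι r × Bool) ⊕ Elem ι r) (fun a => match a with
    | Sum.inl τ => term τ
    | Sum.inr (Sum.inl (e, s)) => side e s
    | Sum.inr (Sum.inr e) => mid e) ?_
  rintro (τ | ⟨e, s⟩ | e)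
  exacts [⟨Sum.inl τ, rfl⟩, ⟨Sum.inr (Sum.inl (e, s)), rfl⟩, ⟨Sum.inr (Sum.inr e), rfl⟩]

instance [Finite ι] : Finite (Edge ι r) := by
  refine Finite.of_surjective (α := (Elem ι r × Bool × Bool) ⊕ (Elem ι r × Bool) ⊕ ι)
    (fun a => match a with
    | Sum.inl (e, s, b) => att e s b
    | Sum.inr (Sum.inl (e, s)) => arm e s
    | Sum.inr (Sum.inr t) => leg t) ?_
  rintro (⟨e, s, b⟩ | ⟨e, s⟩ | t)
  exacts [⟨Sum.inl (e, s, b), rfl⟩, ⟨Sum.inr (Sum.inl (e, s)), rfl⟩, ⟨Sum.inr (Sum.inr t), rfl⟩]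

end Construction

/-- For every even positive integer `k` and every `n`, there
is a finite graph with terminals `(G, T)` with at least `n` vertices such that
`T` is `3k`-edge-connected in `G`, but `G` does not contain `k` pairwise
edge-disjoint `T`-connectors. -/
theorem counterexamples_even_k (k n : ℕ) (hk : 0 < k) (hke : Even k) :
    ∃ (V E : Type) (_ : Fintype V) (_ : Fintype E) (ends : E → Sym2 V) (T : Set V),
      n ≤ Nat.card V ∧
      EdgeConnectedIn ends T (3 * k) ∧
      ¬ ∃ Q : Fin k → Set E,
          (∀ i, IsConnector ends T (Q i)) ∧
          Pairwise fun i j => Disjoint (Q i) (Q j) := by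
  classical
  obtain ⟨h, rfl⟩ := hke
  have hh : 0 < h := by omega
  -- a ring of `N` segments, of which the first `6 h` have their legs at one exceptional terminal
  let N := 12 * h + n
  have : NeZero N := ⟨by omega⟩
  let σ : Equiv.Perm (ZMod N) := Equiv.addRight 1
  let zed : ZMod N → Bool := fun t => decide (t.val < 6 * h)
  let x₀ : Fin (3 * h) := ⟨0, by omega⟩
  refine ⟨Vert (ZMod N) (3 * h), Edge (ZMod N) (3 * h), Fintype.ofFinite _, Fintype.ofFinite _,
    inc σ zed x₀, terms _ _, ?_, ?_, ?_⟩
  · have hinj : Function.Injective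
        (fun t : ZMod N => (term (Sum.inl ((t, 0), true)) : Vert (ZMod N) (3 * h))) := by
      intro t t' htt
      simpa using htt
    have hcard := Nat.card_le_card_of_injective _ hinj
    rw [Nat.card_zmod] at hcard
    omega
  · have hd : 3 * (h + h) = 2 * (3 * h) := by ring
    rw [hd]
    refine edgeConnected ?_ ?_
    · intro t t'
      have hreach : ∀ m : ℕ, Relation.ReflTransGen (fun x y => y = σ x) t (t + m) := by
        intro m
        induction m with
        | zero => simpa using Relation.ReflTransGen.refl
        | succ m ih => exact ih.tail (by simp [σ, add_assoc])
      simpa using hreach (t' - t).val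
    · intro z
      refine ⟨fun i => (((if z then 0 else 6 * h) + i.val : ℕ) : ZMod N), ?_, ?_⟩
      · intro i j hij
        have hval := congrArg ZMod.val hij
        have hi := i.isLt
        have hj := j.isLt
        rw [ZMod.val_natCast_of_lt (by split_ifs <;> omega),
          ZMod.val_natCast_of_lt (by split_ifs <;> omega)] at hval
        exact Fin.ext (by omega)
      · intro i
        have hi := i.isLt
        simp only [zed]
        rw [ZMod.val_natCast_of_lt (by split_ifs <;> omega)]
        cases z
        · simp
        · simp; omega
  · rintro ⟨Q, hQ, hdis⟩
    obtain ⟨cnt, hc⟩ := exists_census (h + h) Q hQ hdis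
    rw [← two_mul] at hc
    exact census_false hh hc

end TConnectors
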